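/- Let G = Δ(2,3,7) = ⟨s₁, s₂ | s₁², s₂³, (s₁s₂)⁷⟩, and set g = s₁s₂⁻¹s₁s₂s₁s₂⁻¹s₁s₂⁻¹s₁s₂, h = s₂⁻¹s₁s₂s₁s₂⁻¹s₁s₂s₁s₂s₁, and w = s₂s₁s₂⁻¹. Then w g w⁻¹ = g⁻¹ and w h w⁻¹ = h⁻¹; in particular the inner automorphism of G given by conjugation by w maps g to g⁻¹ and h to h⁻¹. -/

import Mathlib

/-!
Since `w` is a conjugate of the involution `s₁`, it is itself an involution, and for `w² = 1` the
relation `w x w⁻¹ = x⁻¹` says exactly that `(w x)² = 1`. It therefore suffices that `w g` and `w h`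
are also conjugates of `s₁`. With `y = s₁ s₂`, so that `s₂⁻¹ s₁ = y⁻¹` and `y⁷ = 1`, one finds
`w g = c s₁ c⁻¹` for `c = s₂⁻¹ y³` and `w h = d s₁ d⁻¹` for `d = s₁ y⁻² s₂⁻¹`
(`w_mul_g_eq_conj`, `w_mul_h_eq_conj`).
-/

/-- Relators of the triangle group Δ(p,q,r). -/
def triangleRels (p q r : ℕ) : Set (FreeGroup (Fin 2)) :=
  {FreeGroup.of 0 ^ p, FreeGroup.of 1 ^ q, (FreeGroup.of 0 * FreeGroup.of 1) ^ r}

/-- The generator s₁ of Δ(2,3,7). -/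
def s₁ : PresentedGroup (triangleRels 2 3 7) := PresentedGroup.of 0

/-- The generator s₂ of Δ(2,3,7). -/
def s₂ : PresentedGroup (triangleRels 2 3 7) := PresentedGroup.of 1

theorem conj_eq_inv_of_mul_self {G : Type*} [Group G] {w x : G} (hw : w * w = 1)
    (hwx : (w * x) * (w * x) = 1) : w * x * w⁻¹ = x⁻¹ := by
  rw [inv_eq_of_mul_eq_one_right hw, eq_inv_iff_mul_eq_one]
  simpa only [mul_assoc] using hwx

theorem conj_mul_self {G : Type*} [Group G] {a : G} (ha : a * a = 1) (c : G) :
    (c * a * c⁻¹) * (c * a * c⁻¹) = 1 := by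
  rw [conj_mul, ha, mul_one, mul_inv_cancel]

section

variable {G : Type*} [Group G] {a b : G}

theorem w_mul_g_eq_conj (ha : a * a = 1) (hb : b ^ 3 = 1) (hab : (a * b) ^ 7 = 1) :
    (b * a * b⁻¹) * (a * b⁻¹ * a * b * a * b⁻¹ * a * b⁻¹ * a * b) =
      (b⁻¹ * (a * b) ^ 3) * a * (b⁻¹ * (a * b) ^ 3)⁻¹ := by
  have hai : a⁻¹ = a := inv_eq_of_mul_eq_one_right ha
  have hb2 : b * b = b⁻¹ := eq_inv_of_mul_eq_one_left (by rw [← pow_two, ← pow_succ, hb])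
  have hba : b⁻¹ * a = (a * b)⁻¹ := by rw [mul_inv_rev, hai]
  have hy : (a * b)⁻¹ ^ 3 = (a * b) ^ 4 := by
    rw [inv_pow]; exact inv_eq_of_mul_eq_one_right (by rw [← pow_add, hab])
  calc _ = b * b * (b⁻¹ * a) ^ 3 * b * a * (b⁻¹ * a) ^ 2 * b := by
        simp only [pow_succ, pow_zero, one_mul, mul_assoc, mul_inv_cancel_left]
    _ = b⁻¹ * (a * b) ^ 4 * b * a * (a * b)⁻¹ ^ 2 * b := by rw [hb2, hba, hy]
    _ = b⁻¹ * (a * b) ^ 3 * a * (b * b) * a * (a * b)⁻¹ ^ 2 * b := by simp [pow_succ, mul_assoc]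
    _ = b⁻¹ * (a * b) ^ 3 * a * (b⁻¹ * a) * (a * b)⁻¹ ^ 2 * b := by
        rw [hb2]; simp only [mul_assoc]
    _ = _ := by rw [hba]; simp [pow_succ, mul_assoc]

theorem w_mul_h_eq_conj (ha : a * a = 1) (hb : b ^ 3 = 1) (hab : (a * b) ^ 7 = 1) :
    (b * a * b⁻¹) * (b⁻¹ * a * b * a * b⁻¹ * a * b * a * b * a) =
      (a * (a * b)⁻¹ ^ 2 * b⁻¹) * a * (a * (a * b)⁻¹ ^ 2 * b⁻¹)⁻¹ := by
  have hai : a⁻¹ = a := inv_eq_of_mul_eq_one_right ha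
  have hb2 : b⁻¹ * b⁻¹ = b :=
    inv_injective (by rw [mul_inv_rev, inv_inv]; exact eq_inv_of_mul_eq_one_left (by rw [← pow_two, ← pow_succ, hb]))
  have hba : b⁻¹ * a = (a * b)⁻¹ := by rw [mul_inv_rev, hai]
  have hy : (a * b) ^ 5 = (a * b)⁻¹ ^ 2 := by
    rw [inv_pow]; exact eq_inv_of_mul_eq_one_left (by rw [← pow_add, hab])
  calc _ = b * a * (b⁻¹ * b⁻¹) * a * b * a * (b⁻¹ * a) * b * a * b * a := by
        simp only [mul_assoc]
    _ = a⁻¹ * (a * b) ^ 3 * a * (a * b)⁻¹ * a⁻¹ * (a * b) ^ 2 * a := by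
        rw [hb2, hba]; simp [pow_succ, mul_assoc]
    _ = a⁻¹ * (a * b)⁻¹ ^ 2 * (a * b) ^ 5 * a * (a * b)⁻¹ * a⁻¹ * (a * b) ^ 2 * a := by simp [pow_succ, mul_assoc]
    _ = a⁻¹ * (a * b)⁻¹ ^ 2 * (a * b)⁻¹ ^ 2 * a * (a * b)⁻¹ * a⁻¹ * (a * b) ^ 2 * a := by rw [hy]
    _ = a⁻¹ * (a * b)⁻¹ ^ 2 * b⁻¹ * a⁻¹ * (b⁻¹ * b⁻¹) * a⁻¹ * a⁻¹ * (a * b) ^ 2 * a := by simp [pow_succ, mul_assoc]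
    _ = a * (a * b)⁻¹ ^ 2 * b⁻¹ * a * b * (a * b) ^ 2 * a⁻¹ := by
        rw [hb2, hai, mul_assoc _ a a, ha, mul_one]
    _ = _ := by simp [pow_succ, mul_assoc]

end

theorem stmt13 :
    let g := s₁ * s₂⁻¹ * s₁ * s₂ * s₁ * s₂⁻¹ * s₁ * s₂⁻¹ * s₁ * s₂
    let h := s₂⁻¹ * s₁ * s₂ * s₁ * s₂⁻¹ * s₁ * s₂ * s₁ * s₂ * s₁
    let w := s₂ * s₁ * s₂⁻¹
    w * g * w⁻¹ = g⁻¹ ∧ w * h * w⁻¹ = h⁻¹ := by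
  intro g h w
  have ha : s₁ * s₁ = 1 := by
    rw [← pow_two]
    exact PresentedGroup.one_of_mem (rels := triangleRels 2 3 7)
      (x := FreeGroup.of 0 ^ 2) (by simp [triangleRels])
  have hb : s₂ ^ 3 = 1 :=
    PresentedGroup.one_of_mem (rels := triangleRels 2 3 7)
      (x := FreeGroup.of 1 ^ 3) (by simp [triangleRels])
  have hab : (s₁ * s₂) ^ 7 = 1 :=
    PresentedGroup.one_of_mem (rels := triangleRels 2 3 7)
      (x := (FreeGroup.of 0 * FreeGroup.of 1) ^ 7) (by simp [triangleRels])
  have hw : w * w = 1 := conj_mul_self ha s₂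
  refine ⟨conj_eq_inv_of_mul_self hw ?_, conj_eq_inv_of_mul_self hw ?_⟩
  · rw [w_mul_g_eq_conj ha hb hab]
    exact conj_mul_self ha _
  · rw [w_mul_h_eq_conj ha hb hab]
    exact conj_mul_self ha _
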